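/- arXiv:2602.05048 — 2 statements merged into one kernel-verified Lean document; each statement's English description precedes it below -/
import Mathlib

section
/- (One-sided one-step Bellman bound.) Let M = (T,R) and M̄ = (T',R') be two finite discounted MDPs on (S, A, γ), and let Q_M, Q_{M̄} : S × A → ℝ be two functions such that (i) |max_{a'∈A} Q_{M̄}(s',a')| ≤ V*_{M̄}(s') for all s' ∈ S, and (ii) |Q_M(s,a) − Q_{M̄}(s,a)| ≤ d_{s,a}(M‖M̄) for all (s,a) ∈ S × A. Then |(Γ_M Q_M)(s,a) − (Γ_{M̄} Q_{M̄})(s,a)| ≤ d_{s,a}(M‖M̄) for all (s,a) ∈ S × A. -/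
open Finset

variable {S A : Type*}

/-- Max over the (finite, nonempty) action space. -/
noncomputable def qmax [Fintype A] [Nonempty A] (f : A → ℝ) : ℝ :=
  Finset.univ.sup' Finset.univ_nonempty f

/-- Bellman operator `Γ_M` of the MDP `M = (T, R)` with discount `γ`. -/
noncomputable def bellman [Fintype S] [Fintype A] [Nonempty A]
    (γ : ℝ) (T : S → A → S → ℝ) (R : S → A → ℝ)
    (f : S → A → ℝ) : S → A → ℝ :=
  fun s a => R s a + γ * ∑ s' : S, T s a s' * qmax (f s')

/-- `D_{s,a}(M‖M̄)`, where `Vbar` is the optimal value function of `M̄`. -/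
noncomputable def Dop [Fintype S]
    (γ : ℝ) (T : S → A → S → ℝ) (R : S → A → ℝ)
    (T' : S → A → S → ℝ) (R' : S → A → ℝ) (Vbar : S → ℝ) : S → A → ℝ :=
  fun s a => |R s a - R' s a| + γ * ∑ s' : S, Vbar s' * |T s a s' - T' s a s'|

/-- The operator `L_{M‖M̄}`, where `Vbar` is the optimal value function of `M̄`. -/
noncomputable def Lop [Fintype S] [Fintype A] [Nonempty A]
    (γ : ℝ) (T : S → A → S → ℝ) (R : S → A → ℝ)
    (T' : S → A → S → ℝ) (R' : S → A → ℝ) (Vbar : S → ℝ)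
    (f : S → A → ℝ) : S → A → ℝ :=
  fun s a => Dop γ T R T' R' Vbar s a + γ * ∑ s' : S, T s a s' * qmax (f s')

section OrderedAlgebra

variable {ι : Type*}

theorem abs_sup'_sub_sup'_le {G : Type*} [AddCommGroup G] [LinearOrder G] [IsOrderedAddMonoid G]
    {s : Finset ι} (hs : s.Nonempty) {f g e : ι → G} (h : ∀ i ∈ s, |f i - g i| ≤ e i) :
    |s.sup' hs f - s.sup' hs g| ≤ s.sup' hs e := by
  rw [abs_sub_le_iff, sub_le_iff_le_add, sub_le_iff_le_add]
  constructor
  · refine sup'_le hs f fun i hi => ?_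
    calc f i ≤ e i + g i := sub_le_iff_le_add.mp (abs_sub_le_iff.mp (h i hi)).1
      _ ≤ s.sup' hs e + s.sup' hs g := add_le_add (le_sup' e hi) (le_sup' g hi)
  · refine sup'_le hs g fun i hi => ?_
    calc g i ≤ e i + f i := sub_le_iff_le_add.mp (abs_sub_le_iff.mp (h i hi)).2
      _ ≤ s.sup' hs e + s.sup' hs f := add_le_add (le_sup' e hi) (le_sup' f hi)

variable {K : Type*} [CommRing K] [LinearOrder K] [IsOrderedRing K]

-- Inserting `p * w` rather than `q * v` is what makes the bound one-sided: `e` is weighted by `p`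
-- and `c` bounds `w`.
theorem abs_mul_sub_mul_le {p q v w c e : K} (hp : 0 ≤ p) (hw : |w| ≤ c) (hvw : |v - w| ≤ e) :
    |p * v - q * w| ≤ c * |p - q| + p * e :=
  calc |p * v - q * w| = |w * (p - q) + p * (v - w)| := by ring_nf
    _ ≤ |w * (p - q)| + |p * (v - w)| := abs_add_le _ _
    _ = |w| * |p - q| + p * |v - w| := by rw [abs_mul, abs_mul, abs_of_nonneg hp]
    _ ≤ c * |p - q| + p * e := by gcongr

theorem abs_sum_mul_sub_sum_mul_le {s : Finset ι} {p q v w c e : ι → K}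
    (hp : ∀ i ∈ s, 0 ≤ p i) (hw : ∀ i ∈ s, |w i| ≤ c i) (hvw : ∀ i ∈ s, |v i - w i| ≤ e i) :
    |∑ i ∈ s, p i * v i - ∑ i ∈ s, q i * w i| ≤
      ∑ i ∈ s, c i * |p i - q i| + ∑ i ∈ s, p i * e i := by
  rw [← sum_sub_distrib, ← sum_add_distrib]
  exact (abs_sum_le_sum_abs _ s).trans <| sum_le_sum fun i hi =>
    abs_mul_sub_mul_le (hp i hi) (hw i hi) (hvw i hi)

end OrderedAlgebra

theorem abs_qmax_sub_qmax_le [Fintype A] [Nonempty A] {f g e : A → ℝ}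
    (h : ∀ a, |f a - g a| ≤ e a) : |qmax f - qmax g| ≤ qmax e :=
  abs_sup'_sub_sup'_le univ_nonempty fun a _ => h a

theorem one_sided_one_step_bellman_bound_general [Fintype S] [Fintype A] [Nonempty A]
    {γ : ℝ} (hγ : 0 ≤ γ) {T T' : S → A → S → ℝ} {R R' : S → A → ℝ} {s : S} {a : A}
    (hT : ∀ s', 0 ≤ T s a s') {V : S → ℝ} {Q Q' e : S → A → ℝ}
    (hQ' : ∀ s', |qmax (Q' s')| ≤ V s') (hQQ' : ∀ s' a', |Q s' a' - Q' s' a'| ≤ e s' a') :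
    |bellman γ T R Q s a - bellman γ T' R' Q' s a| ≤ Lop γ T R T' R' V e s a := by
  have expected_value_bound :
      |∑ s', T s a s' * qmax (Q s') - ∑ s', T' s a s' * qmax (Q' s')| ≤
        ∑ s', V s' * |T s a s' - T' s a s'| + ∑ s', T s a s' * qmax (e s') :=
    abs_sum_mul_sub_sum_mul_le (fun s' _ => hT s') (fun s' _ => hQ' s')
      fun s' _ => abs_qmax_sub_qmax_le (hQQ' s')
  calc |bellman γ T R Q s a - bellman γ T' R' Q' s a|
      = |(R s a - R' s a) +
          γ * (∑ s', T s a s' * qmax (Q s') - ∑ s', T' s a s' * qmax (Q' s'))| := by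
        rw [bellman, bellman, add_sub_add_comm, mul_sub]
    _ ≤ |R s a - R' s a| +
          γ * |∑ s', T s a s' * qmax (Q s') - ∑ s', T' s a s' * qmax (Q' s')| := by
        exact (abs_add_le _ _).trans_eq (by rw [abs_mul, abs_of_nonneg hγ])
    _ ≤ |R s a - R' s a| +
          γ * (∑ s', V s' * |T s a s' - T' s a s'| + ∑ s', T s a s' * qmax (e s')) := by
        gcongr
    _ = Lop γ T R T' R' V e s a := by
        rw [Lop, Dop, mul_add, add_assoc]

/-- One-sided one-step Bellman bound. -/
theorem one_sided_one_step_bellman_bound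
    [Fintype S] [Nonempty S] [Fintype A] [Nonempty A]
    (γ : ℝ) (hγ0 : 0 ≤ γ) (hγ1 : γ < 1)
    (T : S → A → S → ℝ) (R : S → A → ℝ)
    (T' : S → A → S → ℝ) (R' : S → A → ℝ)
    (hT : ∀ s a s', 0 ≤ T s a s') (hTsum : ∀ s a, ∑ s' : S, T s a s' = 1)
    (hT' : ∀ s a s', 0 ≤ T' s a s') (hTsum' : ∀ s a, ∑ s' : S, T' s a s' = 1)
    -- `Qstarbar` is the (unique) fixed point of the Bellman operator of `M̄ = (T', R')`,
    -- so that `fun s => qmax (Qstarbar s)` is the optimal value function `V*_{M̄}`.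
    (Qstarbar : S → A → ℝ)
    (hQstarbar : ∀ s a, Qstarbar s a = bellman γ T' R' Qstarbar s a)
    -- `d` is the (unique) fixed point of `L_{M‖M̄}`, i.e. the dissimilarity `d(M‖M̄)`.
    (d : S → A → ℝ)
    (hd : ∀ s a, d s a = Lop γ T R T' R' (fun s => qmax (Qstarbar s)) d s a)
    -- the two functions `Q_M` and `Q_{M̄}` and their hypotheses
    (QM QMbar : S → A → ℝ)
    (hbound : ∀ s', |qmax (QMbar s')| ≤ qmax (Qstarbar s'))
    (hQQ : ∀ s a, |QM s a - QMbar s a| ≤ d s a) :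
    ∀ s a, |bellman γ T R QM s a - bellman γ T' R' QMbar s a| ≤ d s a := by
  intro s a
  rw [hd s a]
  exact one_sided_one_step_bellman_bound_general hγ0 (hT s a) hbound hQQ
end

section
/- (Lemma 4.3, local pseudo-Lipschitz continuity of the optimal Q-value.) Let M = (T,R) and M̄ = (T',R') be two finite discounted MDPs on (S, A, γ) whose rewards are both nonnegative (R s a ≥ 0 and R' s a ≥ 0 for all (s,a)). Then the unique fixed points of their Bellman operators satisfy |Q*_M(s,a) − Q*_{M̄}(s,a)| ≤ Δ_{s,a}(M, M̄) for all (s,a) ∈ S × A. -/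
open Finset

variable {S A : Type*}

/-!
`L_{M‖M̄}` is itself the Bellman operator of an MDP, with the transitions of `M` and the reward
`D(M‖M̄)`. Bellman operators obey a comparison principle: if `f ≤ Γ f` and `Γ g ≤ g`, then `f ≤ g`,
as one sees at a point where `f - g` is maximal. The triangle inequality shows that
`|Q*_M - Q*_M̄|` is a subsolution for `L_{M‖M̄}`, hence lies below its fixed point `d(M‖M̄)`.
Nonnegativity of `V*_M̄`, which the triangle inequality requires, is the comparison of `Q*_M̄` with
the subsolution `0`.
-/

theorem abs_sum_mul_sub_sum_mul_le_s9 {ι 𝕜 : Type*} [CommRing 𝕜] [LinearOrder 𝕜]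
    [IsStrictOrderedRing 𝕜] (u : Finset ι) {p p' v v' : ι → 𝕜}
    (hp : ∀ i ∈ u, 0 ≤ p i) (hv' : ∀ i ∈ u, 0 ≤ v' i) :
    |∑ i ∈ u, p i * v i - ∑ i ∈ u, p' i * v' i| ≤
      ∑ i ∈ u, v' i * |p i - p' i| + ∑ i ∈ u, p i * |v i - v' i| := by
  rw [← sum_sub_distrib, ← sum_add_distrib]
  refine (abs_sum_le_sum_abs _ _).trans (sum_le_sum fun i hi => ?_)
  calc |p i * v i - p' i * v' i|
      = |v' i * (p i - p' i) + p i * (v i - v' i)| := by ring_nf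
    _ ≤ |v' i * (p i - p' i)| + |p i * (v i - v' i)| := abs_add_le _ _
    _ = v' i * |p i - p' i| + p i * |v i - v' i| := by
      rw [abs_mul, abs_mul, abs_of_nonneg (hp i hi), abs_of_nonneg (hv' i hi)]

section qmax

variable [Fintype A] [Nonempty A]

theorem le_qmax (f : A → ℝ) (a : A) : f a ≤ qmax f :=
  le_sup' f (mem_univ a)

theorem qmax_mono : Monotone (qmax : (A → ℝ) → ℝ) :=
  fun _ _ hfg => sup'_mono_fun fun a _ => hfg a

theorem qmax_add_const (f : A → ℝ) (c : ℝ) : qmax (fun a => f a + c) = qmax f + c :=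
  (sup'_add univ f c univ_nonempty).symm

theorem qmax_nonneg {f : A → ℝ} (hf : 0 ≤ f) : 0 ≤ qmax f :=
  (hf (Classical.arbitrary A)).trans (le_qmax f _)

theorem qmax_sub_qmax_le (f g : A → ℝ) : qmax f - qmax g ≤ qmax fun a => |f a - g a| := by
  rw [sub_le_iff_le_add']
  refine sup'_le _ _ fun a _ => ?_
  calc f a ≤ g a + |f a - g a| := sub_le_iff_le_add'.mp (le_abs_self _)
    _ ≤ qmax g + qmax fun a => |f a - g a| :=
      add_le_add (le_qmax g a) (le_qmax (fun a => |f a - g a|) a)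

theorem abs_qmax_sub_qmax_le_s9 (f g : A → ℝ) :
    |qmax f - qmax g| ≤ qmax fun a => |f a - g a| :=
  abs_sub_le_iff.mpr
    ⟨qmax_sub_qmax_le f g, by simpa only [abs_sub_comm] using qmax_sub_qmax_le g f⟩

end qmax

section bellman

variable [Fintype S] [Fintype A] [Nonempty A] {γ : ℝ} {T T' : S → A → S → ℝ} {R R' : S → A → ℝ}

theorem bellman_mono (hγ : 0 ≤ γ) (hT : ∀ s a s', 0 ≤ T s a s') : Monotone (bellman γ T R) := by
  intro f g hfg s a
  have hsum : ∑ s', T s a s' * qmax (f s') ≤ ∑ s', T s a s' * qmax (g s') :=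
    sum_le_sum fun s' _ => mul_le_mul_of_nonneg_left (qmax_mono (hfg s')) (hT s a s')
  exact add_le_add_right (mul_le_mul_of_nonneg_left hsum hγ) _

theorem bellman_add_const (f : S → A → ℝ) (c : ℝ) (s : S) (a : A) :
    bellman γ T R (fun s a => f s a + c) s a =
      bellman γ T R f s a + (γ * ∑ s', T s a s') * c := by
  simp only [bellman, qmax_add_const, mul_add, sum_add_distrib, ← sum_mul]
  ring

theorem le_of_le_bellman_of_bellman_le (hγ : 0 ≤ γ) (hT : ∀ s a s', 0 ≤ T s a s')
    (hγT : ∀ s a, γ * ∑ s', T s a s' < 1) {f g : S → A → ℝ}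
    (hf : f ≤ bellman γ T R f) (hg : bellman γ T R g ≤ g) : f ≤ g := by
  intro s₀ a₀
  have : Nonempty (S × A) := ⟨(s₀, a₀)⟩
  obtain ⟨⟨s, a⟩, hmax⟩ := Finite.exists_max fun p : S × A => f p.1 p.2 - g p.1 p.2
  set K := f s a - g s a with hK
  suffices K ≤ 0 from sub_nonpos.mp ((hmax (s₀, a₀)).trans this)
  by_contra! hKpos
  have hfg : f ≤ fun s a => g s a + K := fun s a => sub_le_iff_le_add'.mp (hmax (s, a))
  have hlt : f s a < g s a + K :=
    calc f s a ≤ bellman γ T R f s a := hf s a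
      _ ≤ bellman γ T R (fun s a => g s a + K) s a := bellman_mono hγ hT hfg s a
      _ = bellman γ T R g s a + (γ * ∑ s', T s a s') * K := bellman_add_const g K s a
      _ < g s a + K :=
        add_lt_add_of_le_of_lt (hg s a) (mul_lt_of_lt_one_left hKpos (hγT s a))
  exact hlt.ne (by rw [hK, add_sub_cancel])

theorem nonneg_of_bellman_le (hγ : 0 ≤ γ) (hT : ∀ s a s', 0 ≤ T s a s')
    (hγT : ∀ s a, γ * ∑ s', T s a s' < 1) (hR : 0 ≤ R) {Q : S → A → ℝ}
    (hQ : bellman γ T R Q ≤ Q) : 0 ≤ Q := by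
  have hzero : 0 ≤ bellman γ T R 0 := fun s a =>
    add_nonneg (hR s a) <| mul_nonneg hγ <| sum_nonneg fun s' _ =>
      mul_nonneg (hT s a s') (qmax_nonneg le_rfl)
  exact le_of_le_bellman_of_bellman_le hγ hT hγT hzero hQ

theorem Lop_eq_bellman (V : S → ℝ) : Lop γ T R T' R' V = bellman γ T (Dop γ T R T' R' V) :=
  rfl

theorem abs_bellman_sub_bellman_le (hγ : 0 ≤ γ) (hT : ∀ s a s', 0 ≤ T s a s')
    (f : S → A → ℝ) {f' : S → A → ℝ} (hf' : ∀ s, 0 ≤ qmax (f' s)) (s : S) (a : A) :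
    |bellman γ T R f s a - bellman γ T' R' f' s a| ≤
      Lop γ T R T' R' (fun s => qmax (f' s)) (fun s a => |f s a - f' s a|) s a := by
  have hvalue : ∑ s', T s a s' * |qmax (f s') - qmax (f' s')| ≤
      ∑ s', T s a s' * qmax fun a' => |f s' a' - f' s' a'| :=
    sum_le_sum fun s' _ => mul_le_mul_of_nonneg_left (abs_qmax_sub_qmax_le_s9 _ _) (hT s a s')
  have hexpect : |∑ s', T s a s' * qmax (f s') - ∑ s', T' s a s' * qmax (f' s')| ≤
      ∑ s', qmax (f' s') * |T s a s' - T' s a s'| +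
        ∑ s', T s a s' * qmax fun a' => |f s' a' - f' s' a'| :=
    (abs_sum_mul_sub_sum_mul_le_s9 univ (fun s' _ => hT s a s') fun s' _ => hf' s').trans
      (add_le_add_right hvalue _)
  simp only [bellman, Lop, Dop]
  rw [add_sub_add_comm, ← mul_sub, add_assoc, ← mul_add]
  refine (abs_add_le _ _).trans (add_le_add_right ?_ _)
  rw [abs_mul, abs_of_nonneg hγ]
  exact mul_le_mul_of_nonneg_left hexpect hγ

theorem abs_sub_le_of_Lop_le (hγ : 0 ≤ γ) (hT : ∀ s a s', 0 ≤ T s a s')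
    (hγT : ∀ s a, γ * ∑ s', T s a s' < 1) {Q Q' d : S → A → ℝ}
    (hQ : Q = bellman γ T R Q) (hQ' : Q' = bellman γ T' R' Q')
    (hV' : ∀ s, 0 ≤ qmax (Q' s)) (hd : Lop γ T R T' R' (fun s => qmax (Q' s)) d ≤ d)
    (s : S) (a : A) : |Q s a - Q' s a| ≤ d s a := by
  have hsub : (fun s a => |Q s a - Q' s a|) ≤
      Lop γ T R T' R' (fun s => qmax (Q' s)) fun s a => |Q s a - Q' s a| := by
    intro s a
    have hstep := abs_bellman_sub_bellman_le (R := R) (T' := T') (R' := R') hγ hT Q hV' s a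
    rwa [← hQ, ← hQ'] at hstep
  rw [Lop_eq_bellman] at hsub hd
  exact le_of_le_bellman_of_bellman_le hγ hT hγT hsub hd s a

theorem optimal_Q_pseudo_lipschitz_general (hγ : 0 ≤ γ)
    (hT : ∀ s a s', 0 ≤ T s a s') (hγT : ∀ s a, γ * ∑ s', T s a s' < 1)
    (hT' : ∀ s a s', 0 ≤ T' s a s') (hγT' : ∀ s a, γ * ∑ s', T' s a s' < 1)
    (hR : 0 ≤ R) (hR' : 0 ≤ R') {Q Q' d d' : S → A → ℝ}
    (hQ : Q = bellman γ T R Q) (hQ' : Q' = bellman γ T' R' Q')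
    (hd : d = Lop γ T R T' R' (fun s => qmax (Q' s)) d)
    (hd' : d' = Lop γ T' R' T R (fun s => qmax (Q s)) d') (s : S) (a : A) :
    |Q s a - Q' s a| ≤ min (d s a) (d' s a) := by
  have hV : ∀ s, 0 ≤ qmax (Q s) := fun s =>
    qmax_nonneg (nonneg_of_bellman_le hγ hT hγT hR hQ.ge s)
  have hV' : ∀ s, 0 ≤ qmax (Q' s) := fun s =>
    qmax_nonneg (nonneg_of_bellman_le hγ hT' hγT' hR' hQ'.ge s)
  refine le_min (abs_sub_le_of_Lop_le hγ hT hγT hQ hQ' hV' hd.ge s a) ?_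
  rw [abs_sub_comm]
  exact abs_sub_le_of_Lop_le hγ hT' hγT' hQ' hQ hV hd'.ge s a

end bellman

/-- Lemma 4.3: local pseudo-Lipschitz continuity of the optimal Q-value. -/
theorem optimal_Q_pseudo_lipschitz
    [Fintype S] [Nonempty S] [Fintype A] [Nonempty A]
    (γ : ℝ) (hγ0 : 0 ≤ γ) (hγ1 : γ < 1)
    (T : S → A → S → ℝ) (R : S → A → ℝ)
    (T' : S → A → S → ℝ) (R' : S → A → ℝ)
    (hT : ∀ s a s', 0 ≤ T s a s') (hTsum : ∀ s a, ∑ s' : S, T s a s' = 1)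
    (hT' : ∀ s a s', 0 ≤ T' s a s') (hTsum' : ∀ s a, ∑ s' : S, T' s a s' = 1)
    (hR : ∀ s a, 0 ≤ R s a) (hR' : ∀ s a, 0 ≤ R' s a)
    -- `QstarM` and `Qstarbar` are the (unique) fixed points of the Bellman operators of
    -- `M = (T, R)` and `M̄ = (T', R')`.
    (QstarM : S → A → ℝ) (hQstarM : ∀ s a, QstarM s a = bellman γ T R QstarM s a)
    (Qstarbar : S → A → ℝ)
    (hQstarbar : ∀ s a, Qstarbar s a = bellman γ T' R' Qstarbar s a)
    -- `d1 = d(M‖M̄)` and `d2 = d(M̄‖M)` are the (unique) fixed points of `L_{M‖M̄}` and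
    -- `L_{M̄‖M}`; the pseudo-metric is `Δ_{s,a}(M,M̄) = min (d1 s a) (d2 s a)`.
    (d1 : S → A → ℝ)
    (hd1 : ∀ s a, d1 s a = Lop γ T R T' R' (fun s => qmax (Qstarbar s)) d1 s a)
    (d2 : S → A → ℝ)
    (hd2 : ∀ s a, d2 s a = Lop γ T' R' T R (fun s => qmax (QstarM s)) d2 s a) :
    ∀ s a, |QstarM s a - Qstarbar s a| ≤ min (d1 s a) (d2 s a) := by
  exact optimal_Q_pseudo_lipschitz_general hγ0 hT (fun s a => by rwa [hTsum, mul_one])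
    hT' (fun s a => by rwa [hTsum', mul_one]) hR hR' (funext₂ hQstarM) (funext₂ hQstarbar)
    (funext₂ hd1) (funext₂ hd2)
end
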